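/- Let S be an abelian subgroup of the Pauli group G_d^n with no nontrivial scalars, and suppose Nat.card S < d^n. Then there exists P ∈ G_d^n with P ∉ S such that the subgroup of G_d^n generated by S ∪ {P} is abelian and has no nontrivial scalars. -/

import Mathlib

open Matrix

noncomputable def q (d : ℕ) : ℂ := Complex.exp (2 * Real.pi * Complex.I / d)

/-- Dot product of two vectors over `ZMod d`. -/
def dotp {n d : ℕ} (A B : Fin n → ZMod d) : ZMod d := ∑ i, A i * B i

/-- The Pauli word `W(U,V)` with entries `q^{⟨U,J⟩}` at `(J, K)` when `J = K + V`. -/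
noncomputable def PauliWord (d n : ℕ) (U V : Fin n → ZMod d) :
    Matrix (Fin n → ZMod d) (Fin n → ZMod d) ℂ :=
  Matrix.of fun J K => if J = K + V then q d ^ (dotp U J).val else 0

/-- The n-qudit Pauli group, as a set of matrices. -/
noncomputable def PauliSet (d n : ℕ) : Set (Matrix (Fin n → ZMod d) (Fin n → ZMod d) ℂ) :=
  {g | ∃ (k : ZMod d) (U V : Fin n → ZMod d), g = q d ^ k.val • PauliWord d n U V}

/-!
A set of matrices that fixes a common nonzero vector contains no scalar matrix other than `1`, and
for finite groups of Pauli matrices the converse holds: a nonscalar Pauli matrix has trace zero, so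
if `1` is the only scalar in `S` then `∑ A ∈ S, A` has trace `d ^ n ≠ 0`, and its columns are fixed
by `S`.

It therefore suffices to find a Pauli word `Z` that commutes with `S`, is not proportional to an
element of `S` and satisfies `Z ^ d = 1`: it preserves the space fixed by `S`, hence has an
eigenvector there, whose eigenvalue `μ` is a power of `q`, and `P = μ⁻¹ Z` fixes this eigenvector.

The diagonal words `Z = W(U, 0)` satisfy `Z ^ d = 1`, which can fail for other words when `d` is
even. Let `L` be the group of labels `(U, V)` of elements of `S`, and let `D` be its projection to
the second factor. The number of `U` orthogonal to `D` is at least `d ^ n / |D|`, while the number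
of `U` with `(U, 0) ∈ L` is `|L| / |D| ≤ |S| / |D| < d ^ n / |D|`; so some `W(U, 0)` commutes with
`S` without being proportional to an element of it.
-/

section FixedSpace

variable {m R : Type*} [Fintype m]

/-- The vectors fixed by every matrix of `S`; for a stabilizer group this is its code space. -/
def fixedSpace [CommSemiring R] (S : Set (Matrix m m R)) : Submodule R (m → R) where
  carrier := {v | ∀ A ∈ S, A *ᵥ v = v}
  zero_mem' A _ := mulVec_zero A
  add_mem' hv hw A hA := by rw [mulVec_add, hv A hA, hw A hA]
  smul_mem' c v hv A hA := by rw [mulVec_smul, hv A hA]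

variable [DecidableEq m]

lemma fixedSpace_closure [CommSemiring R] (S : Set (Matrix m m R)) :
    fixedSpace (Submonoid.closure S : Set (Matrix m m R)) = fixedSpace S := by
  refine le_antisymm (fun v hv A hA => hv A (Submonoid.subset_closure hA)) fun v hv A hA => ?_
  induction hA using Submonoid.closure_induction with
  | mem A hA => exact hv A hA
  | one => exact one_mulVec v
  | mul A B _ _ hA hB => rw [← mulVec_mulVec, hB, hA]

lemma eq_one_of_smul_one_mem_of_fixedSpace_ne_bot [CommRing R] [IsDomain R]
    {S : Set (Matrix m m R)} {c : R} (hS : fixedSpace S ≠ ⊥)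
    (hc : c • (1 : Matrix m m R) ∈ S) : c = 1 := by
  obtain ⟨v, hv, hv0⟩ := Submodule.exists_mem_ne_zero_of_ne_bot hS
  have hcv : c • v = (1 : R) • v := by
    simpa only [smul_mulVec, one_mulVec, one_smul] using hv _ hc
  exact smul_left_injective R hv0 hcv

lemma fixedSpace_ne_bot_of_trace_eq_zero [CommRing R] [CharZero R] [Nonempty m]
    (M : Submonoid (Matrix m m R)) [Finite M] (hunit : ∀ A ∈ M, IsUnit A)
    (htrace : ∀ A ∈ M, A ≠ 1 → A.trace = 0) : fixedSpace (M : Set (Matrix m m R)) ≠ ⊥ := by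
  have := Fintype.ofFinite M
  set T : Matrix m m R := ∑ B : M, (B : Matrix m m R) with hT
  have hT_trace : T.trace = Fintype.card m := by
    have hoff (B : M) (hB : B ≠ 1) : (B : Matrix m m R).trace = 0 :=
      htrace B B.2 (by simpa using hB)
    rw [hT, trace_sum, Fintype.sum_eq_single (1 : M) hoff, OneMemClass.coe_one, trace_one]
  have hT_ne_zero : T ≠ 0 := by
    intro h
    rw [h, trace_zero] at hT_trace
    exact Fintype.card_ne_zero (Nat.cast_eq_zero.mp hT_trace.symm)
  have hT_mul (A : Matrix m m R) (hA : A ∈ M) : A * T = T := by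
    have hinj : Function.Injective fun B : M => (⟨A, hA⟩ * B : M) := fun B C h =>
      Subtype.ext ((hunit A hA).mul_left_cancel (congrArg Subtype.val h))
    rw [hT, Finset.mul_sum]
    exact Function.Bijective.sum_comp (Finite.injective_iff_bijective.mp hinj)
      fun B : M => (B : Matrix m m R)
  obtain ⟨v, hv⟩ : ∃ v, T *ᵥ v ≠ 0 := by
    by_contra! h
    exact hT_ne_zero (ext_of_mulVec_single fun i => by rw [h, zero_mulVec])
  refine Submodule.ne_bot_iff _ |>.mpr ⟨T *ᵥ v, fun A hA => ?_, hv⟩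
  rw [mulVec_mulVec, hT_mul A hA]

lemma exists_fixedSpace_union_smul_ne_bot {K : Type*} [Field K] [IsAlgClosed K]
    {S : Set (Matrix m m K)} {A : Matrix m m K} {k : ℕ} [NeZero k] (hS : fixedSpace S ≠ ⊥)
    (hA : ∀ B ∈ S, Commute B A) (hAk : A ^ k = 1) :
    ∃ c : K, c ^ k = 1 ∧ fixedSpace (S ∪ {c • A}) ≠ ⊥ := by
  have hmaps : ∀ v ∈ fixedSpace S, toLin' A v ∈ fixedSpace S := fun v hv B hB => by
    rw [toLin'_apply, mulVec_mulVec, (hA B hB).eq, ← mulVec_mulVec, hv B hB]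
  have := Submodule.nontrivial_iff_ne_bot.mpr hS
  obtain ⟨μ, hμ⟩ := Module.End.exists_eigenvalue ((toLin' A).restrict hmaps)
  obtain ⟨⟨v, hvS⟩, hv⟩ := hμ.exists_hasEigenvector
  have hv0 : v ≠ 0 := fun h => hv.2 (Subtype.ext h)
  have hAv : A *ᵥ v = μ • v := congrArg Subtype.val hv.apply_eq_smul
  have hμk : μ ^ k = 1 := by
    have hv' : Module.End.HasEigenvector (toLin' A) μ v :=
      ⟨Module.End.mem_eigenspace_iff.mpr hAv, hv0⟩
    have h := hv'.pow_apply k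
    rw [← toLin'_pow, hAk, toLin'_one, LinearMap.id_apply] at h
    exact smul_left_injective K hv0 (by simpa using h.symm)
  have hμ0 : μ ≠ 0 := by
    rintro rfl
    simp [NeZero.ne k] at hμk
  refine ⟨μ⁻¹, by rw [inv_pow, hμk, inv_one], Submodule.ne_bot_iff _ |>.mpr ⟨v, ?_, hv0⟩⟩
  rintro B (hB | rfl)
  · exact hvS B hB
  · rw [smul_mulVec, hAv, inv_smul_smul₀ hμ0]

end FixedSpace

section Annihilator

variable {d : ℕ} [NeZero d] {A B : Type*} [AddCommGroup A] [AddCommGroup B]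

lemma card_addMonoidHom_zmod_le [Finite A] : Nat.card (A →+ ZMod d) ≤ Nat.card A := by
  have := Fintype.ofFinite A
  calc Nat.card (A →+ ZMod d)
      ≤ Nat.card (AddChar A ℂ) := Nat.card_le_card_of_injective
        (ZMod.stdAddChar (N := d)).compAddMonoidHom fun f g h =>
          DFunLike.ext _ _ fun a => ZMod.injective_stdAddChar (DFunLike.congr_fun h a)
    _ = Nat.card A := by rw [Nat.card_eq_fintype_card, Nat.card_eq_fintype_card, AddChar.card_eq]

lemma card_le_card_ker_mul_card [Finite B] (f : A →+ B →+ ZMod d) :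
    Nat.card A ≤ Nat.card f.ker * Nat.card B := by
  have : Finite (B →+ ZMod d) := Finite.of_injective _ DFunLike.coe_injective
  calc Nat.card A = Nat.card f.ker * Nat.card f.range := by
        rw [← AddSubgroup.index_ker, AddSubgroup.card_mul_index]
    _ ≤ Nat.card f.ker * Nat.card (B →+ ZMod d) :=
        Nat.mul_le_mul_left _ (Nat.card_le_card_of_injective _ Subtype.val_injective)
    _ ≤ Nat.card f.ker * Nat.card B := Nat.mul_le_mul_left _ card_addMonoidHom_zmod_le

lemma card_comap_inl_mul_card_map_snd (L : AddSubgroup (A × B)) :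
    Nat.card (L.comap (AddMonoidHom.inl A B)) * Nat.card (L.map (AddMonoidHom.snd A B)) =
      Nat.card L := by
  let e : L.comap (AddMonoidHom.inl A B) ≃ (AddMonoidHom.snd A B).ker.addSubgroupOf L :=
    { toFun := fun a => ⟨⟨(a, 0), a.2⟩, rfl⟩
      invFun := fun x => ⟨x.1.1.1, by
        have hx : x.1.1.2 = 0 := x.2
        simp [← hx]⟩
      left_inv := fun _ => rfl
      right_inv := fun x => Subtype.ext (Subtype.ext (Prod.ext rfl x.2.symm)) }
  rw [Nat.card_congr e, ← AddSubgroup.relIndex_ker]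
  exact AddSubgroup.card_mul_index _

lemma exists_forall_pairing_eq_zero_notMem [Finite B] (β : A →+ B →+ ZMod d)
    (L : AddSubgroup (A × B)) (hL : Nat.card L < Nat.card A) :
    ∃ a, (∀ x ∈ L, β a x.2 = 0) ∧ (a, 0) ∉ L := by
  have : Finite A := Nat.finite_of_card_ne_zero hL.ne_bot
  let D := L.map (AddMonoidHom.snd A B)
  let f : A →+ D →+ ZMod d := (AddMonoidHom.compHom' D.subtype).comp β
  by_contra! h
  have hker : f.ker ≤ L.comap (AddMonoidHom.inl A B) := fun a ha =>
    h a fun x hx => DFunLike.congr_fun (AddMonoidHom.mem_ker.mp ha) ⟨x.2, x, hx, rfl⟩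
  refine hL.not_ge ?_
  calc Nat.card A ≤ Nat.card f.ker * Nat.card D := card_le_card_ker_mul_card f
    _ ≤ Nat.card (L.comap (AddMonoidHom.inl A B)) * Nat.card D :=
      Nat.mul_le_mul_right _ (AddSubgroup.card_le_of_le hker)
    _ = Nat.card L := card_comap_inl_mul_card_map_snd L

end Annihilator

section PauliWord

variable {d n : ℕ} [NeZero d] {U V U' V' : Fin n → ZMod d}

lemma q_pow_val (x : ZMod d) : q d ^ x.val = ZMod.stdAddChar x := by
  rw [ZMod.stdAddChar_apply, ZMod.toCircle_apply, q, ← Complex.exp_nat_mul]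
  congr 1
  ring

lemma stdAddChar_ne_zero (x : ZMod d) : (ZMod.stdAddChar x : ℂ) ≠ 0 :=
  (AddChar.val_isUnit _ x).ne_zero

lemma exists_q_pow_val_eq {c : ℂ} (hc : c ^ d = 1) : ∃ k : ZMod d, q d ^ k.val = c := by
  have hq : IsPrimitiveRoot (q d) d := Complex.isPrimitiveRoot_exp d (NeZero.ne d)
  obtain ⟨i, hi, rfl⟩ := hq.eq_pow_of_pow_eq_one hc
  exact ⟨i, by rw [ZMod.val_cast_of_lt hi]⟩

lemma pauliWord_apply (U V J K : Fin n → ZMod d) :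
    PauliWord d n U V J K = if J = K + V then ZMod.stdAddChar (U ⬝ᵥ J) else 0 := by
  rw [PauliWord, of_apply, q_pow_val]
  rfl

lemma pauliWord_zero_zero : PauliWord d n 0 0 = 1 := by
  ext J K
  simp [pauliWord_apply, one_apply]

lemma pauliWord_mul (U V U' V' : Fin n → ZMod d) :
    PauliWord d n U V * PauliWord d n U' V' =
      (ZMod.stdAddChar (-(U' ⬝ᵥ V)) : ℂ) • PauliWord d n (U + U') (V + V') := by
  ext J K
  rw [mul_apply, Finset.sum_eq_single (J - V)
    (fun L _ hL => by simp [pauliWord_apply, ← sub_eq_iff_eq_add, hL.symm]) (by simp)]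
  have hJ : J - V = K + V' ↔ J = K + (V + V') := by
    rw [sub_eq_iff_eq_add, add_assoc, add_comm V']
  simp only [pauliWord_apply, Matrix.smul_apply, smul_eq_mul, sub_add_cancel, if_true, hJ, mul_ite,
    mul_zero, ← AddChar.map_add_eq_mul, dotProduct_sub, add_dotProduct]
  congr 2
  ring

lemma pauliWord_commute (h : U ⬝ᵥ V' = U' ⬝ᵥ V) :
    Commute (PauliWord d n U V) (PauliWord d n U' V') := by
  rw [Commute, SemiconjBy, pauliWord_mul, pauliWord_mul, h, add_comm U, add_comm V]

lemma pauliWord_zero_right_pow (U : Fin n → ZMod d) (k : ℕ) :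
    PauliWord d n U 0 ^ k = PauliWord d n (k • U) 0 := by
  induction k with
  | zero => rw [pow_zero, zero_smul, pauliWord_zero_zero]
  | succ k ih =>
    rw [pow_succ, ih, pauliWord_mul, dotProduct_zero, neg_zero, AddChar.map_zero_eq_one, one_smul,
      ← succ_nsmul, add_zero]

lemma pauliWord_zero_right_pow_eq_one (U : Fin n → ZMod d) : PauliWord d n U 0 ^ d = 1 := by
  rw [pauliWord_zero_right_pow, ZModModule.char_nsmul_eq_zero, pauliWord_zero_zero]

lemma sum_stdAddChar_dotProduct_eq_zero {ι : Type*} [Fintype ι] [DecidableEq ι] {v : ι → ZMod d}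
    (hv : v ≠ 0) : ∑ w, (ZMod.stdAddChar (v ⬝ᵥ w) : ℂ) = 0 := by
  let ψ : AddChar (ι → ZMod d) ℂ :=
    ZMod.stdAddChar.compAddMonoidHom (dotProductBilin (ZMod d) (ZMod d) v).toAddMonoidHom
  have hψ : ψ ≠ 0 := fun h => hv <| dotProduct_eq_zero_iff.mp fun w =>
    ZMod.injective_stdAddChar ((DFunLike.congr_fun h w).trans (AddChar.map_zero_eq_one _).symm)
  exact AddChar.sum_eq_zero_iff_ne_zero.mpr hψ

lemma trace_pauliWord_eq_zero (h : (U, V) ≠ 0) : (PauliWord d n U V).trace = 0 := by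
  simp only [trace, diag_apply, pauliWord_apply, left_eq_add]
  rcases eq_or_ne V 0 with rfl | hV
  · simpa using sum_stdAddChar_dotProduct_eq_zero fun hU => h (by rw [hU, Prod.mk_zero_zero])
  · simp [hV]

lemma eq_of_smul_pauliWord_eq {c c' : ℂ} (hc : c ≠ 0)
    (h : c • PauliWord d n U V = c' • PauliWord d n U' V') : (U, V) = (U', V') := by
  by_contra hne
  have hne' : (U' + -U, V' + -V) ≠ 0 := fun h0 => hne <| by
    simpa [← sub_eq_add_neg, sub_eq_zero, Prod.ext_iff, eq_comm] using h0
  have htrace := congrArg (fun A => (A * PauliWord d n (-U) (-V)).trace) h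
  simp [pauliWord_mul, trace_pauliWord_eq_zero hne', pauliWord_zero_zero, hc,
    stdAddChar_ne_zero, NeZero.ne d] at htrace

lemma pauliSet_finite : (PauliSet d n).Finite := by
  refine (Set.finite_range fun p : ZMod d × (Fin n → ZMod d) × (Fin n → ZMod d) =>
    q d ^ p.1.val • PauliWord d n p.2.1 p.2.2).subset ?_
  rintro _ ⟨k, U, V, rfl⟩
  exact ⟨(k, U, V), rfl⟩

lemma eq_smul_one_or_trace_eq_zero {A : Matrix (Fin n → ZMod d) (Fin n → ZMod d) ℂ}
    (hA : A ∈ PauliSet d n) : (∃ c : ℂ, A = c • 1) ∨ A.trace = 0 := by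
  obtain ⟨k, U, V, rfl⟩ := hA
  rcases eq_or_ne (U, V) 0 with h | h
  · obtain ⟨rfl, rfl⟩ := Prod.mk_eq_zero.mp h
    exact .inl ⟨_, by rw [pauliWord_zero_zero]⟩
  · exact .inr (by rw [trace_smul, trace_pauliWord_eq_zero h, smul_zero])

end PauliWord

section LabelGroup

variable {d n : ℕ} [NeZero d]

/-- The labels `(U, V)` of the Pauli words proportional to an element of `M`: the image of a
stabilizer group in the symplectic module `(ℤ/d)ⁿ × (ℤ/d)ⁿ`. -/
def labelGroup (M : Submonoid (Matrix (Fin n → ZMod d) (Fin n → ZMod d) ℂ)) :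
    AddSubgroup ((Fin n → ZMod d) × (Fin n → ZMod d)) :=
  let labels : AddSubmonoid ((Fin n → ZMod d) × (Fin n → ZMod d)) :=
    { carrier := {w | ∃ c : ℂ, c ≠ 0 ∧ c • PauliWord d n w.1 w.2 ∈ M}
      zero_mem' := ⟨1, one_ne_zero, by simp [pauliWord_zero_zero, M.one_mem]⟩
      add_mem' := by
        rintro ⟨U, V⟩ ⟨U', V'⟩ ⟨c, hc, hcM⟩ ⟨c', hc', hcM'⟩
        refine ⟨c * c' * ZMod.stdAddChar (-(U' ⬝ᵥ V)),
          mul_ne_zero (mul_ne_zero hc hc') (stdAddChar_ne_zero _), ?_⟩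
        have h := M.mul_mem hcM hcM'
        rwa [smul_mul_smul_comm, pauliWord_mul, smul_smul] at h }
  { labels with
    neg_mem' := fun {w} hw => by
      have hneg : -w = (d - 1) • w := by
        rw [neg_eq_iff_add_eq_zero, ← succ_nsmul', Nat.sub_add_cancel NeZero.one_le,
          ZModModule.char_nsmul_eq_zero]
      rw [hneg]
      exact labels.nsmul_mem hw (d - 1) }

variable {M : Submonoid (Matrix (Fin n → ZMod d) (Fin n → ZMod d) ℂ)}

lemma mem_labelGroup {w : (Fin n → ZMod d) × (Fin n → ZMod d)} :
    w ∈ labelGroup M ↔ ∃ c : ℂ, c ≠ 0 ∧ c • PauliWord d n w.1 w.2 ∈ M :=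
  Iff.rfl

lemma card_labelGroup_le [Finite M] : Nat.card (labelGroup M) ≤ Nat.card M := by
  choose c hc hcM using fun w : labelGroup M => mem_labelGroup.mp w.2
  refine Nat.card_le_card_of_injective (fun w => (⟨_, hcM w⟩ : M)) fun w w' h => ?_
  exact Subtype.ext (eq_of_smul_pauliWord_eq (hc w) (congrArg Subtype.val h))

lemma exists_diagonal_pauliWord_commute (hM : (M : Set _) ⊆ PauliSet d n)
    (hcard : Nat.card M < d ^ n) :
    ∃ U, (∀ A ∈ M, Commute A (PauliWord d n U 0)) ∧
      ∀ c : ℂ, c ≠ 0 → c • PauliWord d n U 0 ∉ M := by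
  have : Finite M := (pauliSet_finite.subset hM).to_subtype
  let β : (Fin n → ZMod d) →+ (Fin n → ZMod d) →+ ZMod d :=
    AddMonoidHom.mk' (fun U => (dotProductBilin (ZMod d) (ZMod d) U).toAddMonoidHom)
      fun U U' => by ext; simp
  obtain ⟨U, hU, hUM⟩ := exists_forall_pairing_eq_zero_notMem β (labelGroup M)
    (card_labelGroup_le.trans_lt (by simpa using hcard))
  refine ⟨U, fun A hA => ?_, fun c hc hcM => hUM ⟨c, hc, hcM⟩⟩
  obtain ⟨k, U', V', rfl⟩ := hM hA
  have hperp : U ⬝ᵥ V' = 0 := hU (U', V') ⟨_, q_pow_val k ▸ stdAddChar_ne_zero k, hA⟩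
  exact (pauliWord_commute (by rw [dotProduct_zero, hperp])).smul_left _

lemma fixedSpace_ne_bot_of_subset_pauliSet (hM : (M : Set _) ⊆ PauliSet d n)
    (hunit : ∀ A ∈ M, IsUnit A)
    (hscal : ∀ c : ℂ, c • (1 : Matrix (Fin n → ZMod d) (Fin n → ZMod d) ℂ) ∈ M →
      c • (1 : Matrix (Fin n → ZMod d) (Fin n → ZMod d) ℂ) = 1) :
    fixedSpace (M : Set (Matrix (Fin n → ZMod d) (Fin n → ZMod d) ℂ)) ≠ ⊥ := by
  have : Finite M := (pauliSet_finite.subset hM).to_subtype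
  refine fixedSpace_ne_bot_of_trace_eq_zero M hunit fun A hA hA1 => ?_
  refine (eq_smul_one_or_trace_eq_zero (hM hA)).resolve_left ?_
  rintro ⟨c, rfl⟩
  exact hA1 (hscal c hA)

end LabelGroup

theorem extend_abelian_pauli_subgroup (d n : ℕ) [NeZero d] (hd : 2 ≤ d) (hn : 1 ≤ n)
    (S : Set (Matrix (Fin n → ZMod d) (Fin n → ZMod d) ℂ))
    (hSsub : S ⊆ PauliSet d n)
    (hS1 : (1 : Matrix (Fin n → ZMod d) (Fin n → ZMod d) ℂ) ∈ S)
    (hSmul : ∀ a ∈ S, ∀ b ∈ S, a * b ∈ S)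
    (hSinv : ∀ a ∈ S, ∃ b ∈ S, a * b = 1)
    (hScomm : ∀ a ∈ S, ∀ b ∈ S, a * b = b * a)
    (hSscal : ∀ c : ℂ, c • (1 : Matrix (Fin n → ZMod d) (Fin n → ZMod d) ℂ) ∈ S →
      c • (1 : Matrix (Fin n → ZMod d) (Fin n → ZMod d) ℂ) = 1)
    (hcard : Nat.card S < d ^ n) :
    ∃ P ∈ PauliSet d n, P ∉ S ∧
      (∀ a ∈ Submonoid.closure (S ∪ {P}), ∀ b ∈ Submonoid.closure (S ∪ {P}),
        a * b = b * a) ∧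
      (∀ c : ℂ, c • (1 : Matrix (Fin n → ZMod d) (Fin n → ZMod d) ℂ) ∈
          Submonoid.closure (S ∪ {P}) →
        c • (1 : Matrix (Fin n → ZMod d) (Fin n → ZMod d) ℂ) = 1) := by
  let M : Submonoid (Matrix (Fin n → ZMod d) (Fin n → ZMod d) ℂ) :=
    { carrier := S, mul_mem' := fun {a b} ha hb => hSmul a ha b hb, one_mem' := hS1 }
  have hunit : ∀ A ∈ M, IsUnit A := fun A hA =>
    let ⟨_, _, hAB⟩ := hSinv A hA
    IsUnit.of_mul_eq_one _ hAB
  have hfixS : fixedSpace S ≠ ⊥ :=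
    fixedSpace_ne_bot_of_subset_pauliSet (M := M) hSsub hunit hSscal
  obtain ⟨U, hcomm, hU⟩ := exists_diagonal_pauliWord_commute (M := M) hSsub hcard
  obtain ⟨c, hc, hfix⟩ :=
    exists_fixedSpace_union_smul_ne_bot hfixS hcomm (pauliWord_zero_right_pow_eq_one U)
  have hc0 : c ≠ 0 := fun h => by simp [h, NeZero.ne d] at hc
  have hcommP : ∀ A ∈ S ∪ {c • PauliWord d n U 0}, ∀ B ∈ S ∪ {c • PauliWord d n U 0},
      A * B = B * A := by
    rintro A (hA | rfl) B (hB | rfl)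
    exacts [hScomm A hA B hB, (hcomm A hA).smul_right c, ((hcomm B hB).smul_right c).symm, rfl]
  obtain ⟨k, rfl⟩ := exists_q_pow_val_eq hc
  have := Submonoid.isMulCommutative_closure _ hcommP
  refine ⟨_, ⟨k, U, 0, rfl⟩, hU _ hc0, fun A hA B hB => setLike_mul_comm hA hB, fun c' hc' => ?_⟩
  rw [← fixedSpace_closure] at hfix
  rw [eq_one_of_smul_one_mem_of_fixedSpace_ne_bot hfix hc', one_smul]
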